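/- arXiv:1301.6453 — 3 statements merged into one kernel-verified Lean document; each statement's English description precedes it below -/
import Mathlib

section
/- Let F be a field and M ≥ 1 an integer. Define the system matrix Q ∈ F^{(2M−1)×(2M−1)} as the block matrix [[I_M, Q12],[Q21, I_{M−1}]]. Then the matrices I_M − Q12·Q21 and I_{M−1} − Q21·Q12 are invertible, and choosing M1 = (I_M − Q12·Q21)^{-1} and M2 = −(I_{M−1} − Q21·Q12)^{-1}, the product Q · blockdiag(M1, M2) · Q equals the block-diagonal matrix blockdiag(I_M, −I_{M−1}). (This is Lemma 1 of the paper: the chosen finite-field precoding matrices M1, M2 at the relays make the end-to-end system matrix diagonal.) -/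
open Matrix

/-- `Q12 ∈ F^{M×(M−1)}`: a zero row on top of the identity matrix `I_{M−1}`. -/
def Q12 (F : Type*) [Semiring F] (M : ℕ) : Matrix (Fin M) (Fin (M - 1)) F :=
  fun i j => if (i : ℕ) = (j : ℕ) + 1 then 1 else 0

/-- `Q21 ∈ F^{(M−1)×M}`: the identity matrix `I_{M−1}` followed by a zero column. -/
def Q21 (F : Type*) [Semiring F] (M : ℕ) : Matrix (Fin (M - 1)) (Fin M) F :=
  fun i j => if (i : ℕ) = (j : ℕ) then 1 else 0

/-- Lemma 1: the matrices `I_M − Q12·Q21` and `I_{M−1} − Q21·Q12` are invertible, and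
with `M1 = (I_M − Q12·Q21)⁻¹`, `M2 = −(I_{M−1} − Q21·Q12)⁻¹`, the end-to-end system
matrix `Q · blockdiag(M1, M2) · Q` equals `blockdiag(I_M, −I_{M−1})`. -/
theorem stmt_0 (F : Type*) [Field F] (M : ℕ) (hM : 1 ≤ M) :
    IsUnit ((1 : Matrix (Fin M) (Fin M) F) - Q12 F M * Q21 F M) ∧
    IsUnit ((1 : Matrix (Fin (M - 1)) (Fin (M - 1)) F) - Q21 F M * Q12 F M) ∧
    (fromBlocks (1 : Matrix (Fin M) (Fin M) F) (Q12 F M) (Q21 F M) 1) *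
        (fromBlocks ((1 - Q12 F M * Q21 F M)⁻¹) 0 0 (-(1 - Q21 F M * Q12 F M)⁻¹)) *
        (fromBlocks 1 (Q12 F M) (Q21 F M) 1) =
      fromBlocks (1 : Matrix (Fin M) (Fin M) F) 0 0 (-1) := by
  have hdet : ((1 : Matrix (Fin M) (Fin M) F) - Q12 F M * Q21 F M).det = 1 := by
    have hz : ∀ i j : Fin M, i ≤ j → (Q12 F M * Q21 F M) i j = 0 := by
      intro i j hij
      rw [Matrix.mul_apply]
      refine Finset.sum_eq_zero fun k _ => ?_
      have hij' : (i : ℕ) ≤ (j : ℕ) := hij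
      by_cases h1 : (i : ℕ) = (k : ℕ) + 1
      · have h2 : ¬ ((k : ℕ) = (j : ℕ)) := by omega
        simp [Q21, h2]
      · simp [Q12, h1]
    rw [Matrix.det_of_isLowerTriangular]
    · refine Finset.prod_eq_one fun i _ => ?_
      rw [Matrix.sub_apply, hz i i le_rfl]
      simp
    · intro i j hij
      have hlt : i < j := hij
      rw [Matrix.sub_apply, hz i j hlt.le, Matrix.one_apply_ne hlt.ne]
      simp
  have hdet2 : ((1 : Matrix (Fin (M - 1)) (Fin (M - 1)) F) - Q21 F M * Q12 F M).det = 1 := by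
    rw [Matrix.det_one_sub_mul_comm, hdet]
  have hu1 : IsUnit ((1 : Matrix (Fin M) (Fin M) F) - Q12 F M * Q21 F M).det := by
    rw [hdet]; exact isUnit_one
  have hu2 : IsUnit ((1 : Matrix (Fin (M - 1)) (Fin (M - 1)) F) - Q21 F M * Q12 F M).det := by
    rw [hdet2]; exact isUnit_one
  refine ⟨(Matrix.isUnit_iff_isUnit_det _).2 hu1, (Matrix.isUnit_iff_isUnit_det _).2 hu2, ?_⟩
  have hX := Matrix.nonsing_inv_mul _ hu1
  have hY := Matrix.mul_nonsing_inv _ hu2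
  have hY' := Matrix.nonsing_inv_mul _ hu2
  have hX' := Matrix.mul_nonsing_inv _ hu1
  generalize ((1 : Matrix (Fin M) (Fin M) F) - Q12 F M * Q21 F M)⁻¹ = X at *
  generalize ((1 : Matrix (Fin (M - 1)) (Fin (M - 1)) F) - Q21 F M * Q12 F M)⁻¹ = Y at *
  generalize Q12 F M = A at *
  generalize Q21 F M = B at *
  have hAY : A * Y = X * A := by
    calc A * Y = (X * (1 - A * B)) * (A * Y) := by rw [hX, Matrix.one_mul]
      _ = X * A * ((1 - B * A) * Y) := by
        simp only [Matrix.mul_sub, Matrix.sub_mul, Matrix.mul_one, Matrix.one_mul,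
          Matrix.mul_assoc]
      _ = X * A := by rw [hY, Matrix.mul_one]
  have hBX : B * X = Y * B := by
    calc B * X = (Y * (1 - B * A)) * (B * X) := by rw [hY', Matrix.one_mul]
      _ = Y * B * ((1 - A * B) * X) := by
        simp only [Matrix.mul_sub, Matrix.sub_mul, Matrix.mul_one, Matrix.one_mul,
          Matrix.mul_assoc]
      _ = Y * B := by rw [hX', Matrix.mul_one]
  have e1 : X - X * A * B = 1 := by
    rw [← hX, Matrix.mul_sub, Matrix.mul_one, Matrix.mul_assoc]
  have e2 : Y * B * A - Y = -1 := by
    rw [← hY', Matrix.mul_sub, Matrix.mul_one, Matrix.mul_assoc, neg_sub]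
  rw [Matrix.fromBlocks_multiply, Matrix.fromBlocks_multiply]
  simp only [Matrix.one_mul, Matrix.mul_one, Matrix.mul_zero, add_zero, zero_add,
    Matrix.mul_neg, Matrix.neg_mul, hAY, hBX]
  simp only [← sub_eq_add_neg, e1, e2, sub_self]
end

section
/- Let F be a field and M ≥ 1. The system matrix Q = [[I_M, Q12],[Q21, I_{M−1}]] ∈ F^{(2M−1)×(2M−1)} is invertible, and its inverse is given explicitly by Q^{-1} = blockdiag(M1, M2) · Q · blockdiag(I_M, −I_{M−1}), where M1 = (I_M − Q12·Q21)^{-1} and M2 = −(I_{M−1} − Q21·Q12)^{-1}. -/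
open Matrix

theorem det_one_sub_aux (F : Type*) [Field F] (M : ℕ) :
    (1 - Q12 F M * Q21 F M).det = 1 := by
  have key : ∀ i j : Fin M, i ≤ j → (Q12 F M * Q21 F M) i j = 0 := by
    intro i j hij
    rw [Matrix.mul_apply]
    refine Finset.sum_eq_zero fun k _ => ?_
    have hij' : (i : ℕ) ≤ (j : ℕ) := hij
    unfold Q12 Q21
    by_cases h1 : (i : ℕ) = (k : ℕ) + 1
    · have h2 : ¬ ((k : ℕ) = (j : ℕ)) := by omega
      simp [h2]
    · simp [h1]
  rw [Matrix.det_of_lowerTriangular]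
  · refine Finset.prod_eq_one fun i _ => ?_
    simp [key i i le_rfl]
  · intro i j hij
    have h : i < j := hij
    simp [key i j h.le, Matrix.one_apply_ne h.ne]

/-- The system matrix `Q = [[I_M, Q12],[Q21, I_{M−1}]]` is invertible, with
`Q⁻¹ = blockdiag(M1, M2) · Q · blockdiag(I_M, −I_{M−1})`, where
`M1 = (I_M − Q12·Q21)⁻¹` and `M2 = −(I_{M−1} − Q21·Q12)⁻¹`. -/
theorem stmt_3 (F : Type*) [Field F] (M : ℕ) (hM : 1 ≤ M) :
    IsUnit (fromBlocks (1 : Matrix (Fin M) (Fin M) F) (Q12 F M) (Q21 F M) 1) ∧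
    (fromBlocks (1 : Matrix (Fin M) (Fin M) F) (Q12 F M) (Q21 F M) 1)⁻¹ =
      fromBlocks ((1 - Q12 F M * Q21 F M)⁻¹) 0 0 (-(1 - Q21 F M * Q12 F M)⁻¹) *
        fromBlocks (1 : Matrix (Fin M) (Fin M) F) (Q12 F M) (Q21 F M) 1 *
        fromBlocks (1 : Matrix (Fin M) (Fin M) F) 0 0 (-1) := by
  have h1 : IsUnit (1 - Q12 F M * Q21 F M).det := by
    rw [det_one_sub_aux]; exact isUnit_one
  have h2 : IsUnit (1 - Q21 F M * Q12 F M).det := by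
    rw [Matrix.det_one_sub_mul_comm, det_one_sub_aux]; exact isUnit_one
  have e1 := Matrix.nonsing_inv_mul _ h1
  have e2 := Matrix.nonsing_inv_mul _ h2
  have key : (fromBlocks ((1 - Q12 F M * Q21 F M)⁻¹) 0 0 (-(1 - Q21 F M * Q12 F M)⁻¹) *
        fromBlocks (1 : Matrix (Fin M) (Fin M) F) (Q12 F M) (Q21 F M) 1 *
        fromBlocks (1 : Matrix (Fin M) (Fin M) F) 0 0 (-1)) *
      fromBlocks (1 : Matrix (Fin M) (Fin M) F) (Q12 F M) (Q21 F M) 1 = 1 := by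
    rw [Matrix.mul_sub, Matrix.mul_one, ← Matrix.mul_assoc] at e1 e2
    simp only [Matrix.fromBlocks_multiply, Matrix.mul_one, Matrix.mul_zero, Matrix.zero_mul,
      Matrix.mul_neg, Matrix.neg_mul, add_zero, zero_add, neg_neg, neg_zero]
    rw [← Matrix.fromBlocks_one, Matrix.fromBlocks_inj]
    refine ⟨?_, ?_, ?_, ?_⟩
    · rw [← sub_eq_add_neg]; exact e1
    · exact add_neg_cancel _
    · exact neg_add_cancel _
    · rw [neg_add_eq_sub]; exact e2
  exact ⟨(Matrix.isUnit_iff_isUnit_det _).2 (Matrix.isUnit_det_of_left_inverse key),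
    Matrix.inv_eq_left_inv key⟩
end

section
/- Let M, K ≥ 1, let s > 0 be a real number, let H ∈ ℂ^{M×M}, C ∈ ℂ^{M×K}, and b ∈ ℂ^M. Then the matrix s^{-1}·I_K + C^H·H^H·H·C is positive definite (hence invertible), and the minimum over α ∈ ℂ^M of the effective-noise variance s·‖C^H·(H^H·α − b)‖² + ‖α‖² is attained and equals b^H·C·(s^{-1}·I_K + C^H·H^H·H·C)^{-1}·C^H·b. (This quantity is denoted σ²(HC, b) in the paper, with s = SNR_eff.) -/
open Matrix
open scoped ComplexOrder

/-- Squared Hermitian (Euclidean) norm of a complex vector. -/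
noncomputable def hnormSq {n : ℕ} (x : Fin n → ℂ) : ℝ := ∑ i, Complex.normSq (x i)

lemma hnormSq_eq {n : ℕ} (x : Fin n → ℂ) : hnormSq x = (star x ⬝ᵥ x).re := by
  simp [hnormSq, dotProduct, Complex.normSq_apply]

lemma hnormSq_nonneg {n : ℕ} (x : Fin n → ℂ) : 0 ≤ hnormSq x :=
  Finset.sum_nonneg fun i _ => Complex.normSq_nonneg _

lemma hnormSq_add {n : ℕ} (x y : Fin n → ℂ) :
    hnormSq (x + y) = hnormSq x + 2 * (star x ⬝ᵥ y).re + hnormSq y := by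
  simp only [hnormSq, dotProduct, Complex.re_sum, Finset.mul_sum, ← Finset.sum_add_distrib]
  refine Finset.sum_congr rfl fun i _ => ?_
  simp [Complex.normSq_apply]
  ring

lemma hnormSq_sub_smul {n : ℕ} (t : ℝ) (x y : Fin n → ℂ) :
    hnormSq (y - (t : ℂ) • x) = t ^ 2 * hnormSq x - 2 * t * (star x ⬝ᵥ y).re + hnormSq y := by
  simp only [hnormSq, dotProduct, Complex.re_sum, Finset.mul_sum, ← Finset.sum_add_distrib,
    ← Finset.sum_sub_distrib]
  refine Finset.sum_congr rfl fun i _ => ?_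
  simp [Complex.normSq_apply]
  ring

lemma key {M K : ℕ} (s : ℝ) (hs : 0 < s) (G : Matrix (Fin M) (Fin K) ℂ) (c w : Fin K → ℂ)
    (hw : ((s⁻¹ : ℂ) • (1 : Matrix (Fin K) (Fin K) ℂ) + Gᴴ * G) *ᵥ w = c) (d : Fin M → ℂ) :
    s * hnormSq (Gᴴ *ᵥ (G *ᵥ w + d) - c) + hnormSq (G *ᵥ w + d)
      = (star c ⬝ᵥ w).re + (s * hnormSq (Gᴴ *ᵥ d) + hnormSq d) := by
  have h1 : Gᴴ *ᵥ (G *ᵥ w + d) - c = Gᴴ *ᵥ d - ((s⁻¹ : ℝ) : ℂ) • w := by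
    rw [← hw, mulVec_add, add_mulVec, smul_mulVec, one_mulVec, mulVec_mulVec]
    push_cast
    abel
  have h2 : star (G *ᵥ w) ⬝ᵥ d = star w ⬝ᵥ (Gᴴ *ᵥ d) := by
    rw [star_mulVec, dotProduct_mulVec]
  have h3 : (star c ⬝ᵥ w).re = s⁻¹ * hnormSq w + hnormSq (G *ᵥ w) := by
    have : star c ⬝ᵥ w = ((s⁻¹ : ℝ) : ℂ) * (star w ⬝ᵥ w) + star (G *ᵥ w) ⬝ᵥ (G *ᵥ w) := by
      rw [← hw, add_mulVec, smul_mulVec, one_mulVec, star_add, add_dotProduct, star_smul,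
        smul_dotProduct, ← mulVec_mulVec, star_mulVec Gᴴ, conjTranspose_conjTranspose,
        ← dotProduct_mulVec]
      simp
    rw [this, hnormSq_eq, hnormSq_eq, Complex.add_re, Complex.re_ofReal_mul]
  rw [h1, hnormSq_sub_smul, hnormSq_add, h2, h3]
  field_simp
  ring

/-- The matrix `s⁻¹·I_K + Cᴴ·Hᴴ·H·C` is positive definite (hence invertible), and the
minimum over `α ∈ ℂ^M` of the effective-noise variance `s·‖Cᴴ·(Hᴴ·α − b)‖² + ‖α‖²`
is attained and equals `bᴴ·C·(s⁻¹·I_K + Cᴴ·Hᴴ·H·C)⁻¹·Cᴴ·b` (the paper's `σ²(HC, b)`). -/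
theorem stmt_12 (M K : ℕ) (hM : 1 ≤ M) (hK : 1 ≤ K) (s : ℝ) (hs : 0 < s)
    (H : Matrix (Fin M) (Fin M) ℂ) (C : Matrix (Fin M) (Fin K) ℂ) (b : Fin M → ℂ) :
    (((s⁻¹ : ℂ) • (1 : Matrix (Fin K) (Fin K) ℂ) + Cᴴ * Hᴴ * H * C).PosDef) ∧
    IsUnit ((s⁻¹ : ℂ) • (1 : Matrix (Fin K) (Fin K) ℂ) + Cᴴ * Hᴴ * H * C) ∧
    IsLeast
      {x : ℝ | ∃ α : Fin M → ℂ,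
        x = s * hnormSq (Cᴴ *ᵥ (Hᴴ *ᵥ α - b)) + hnormSq α}
      (((star b) ᵥ* (C * ((s⁻¹ : ℂ) • 1 + Cᴴ * Hᴴ * H * C)⁻¹ * Cᴴ) ⬝ᵥ b).re) := by
  have hA : Cᴴ * Hᴴ * H * C = (H * C)ᴴ * (H * C) := by
    rw [conjTranspose_mul]; simp only [Matrix.mul_assoc]
  have hpd : ((s⁻¹ : ℂ) • (1 : Matrix (Fin K) (Fin K) ℂ) + Cᴴ * Hᴴ * H * C).PosDef := by
    rw [hA]
    refine PosDef.add_posSemidef ?_ (posSemidef_conjTranspose_mul_self _)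
    refine PosDef.smul PosDef.one ?_
    rw [← Complex.ofReal_inv]
    exact_mod_cast inv_pos.mpr hs
  refine ⟨hpd, hpd.isUnit, ?_⟩
  have hdet := (Matrix.isUnit_iff_isUnit_det _).1 hpd.isUnit
  set A := (s⁻¹ : ℂ) • (1 : Matrix (Fin K) (Fin K) ℂ) + Cᴴ * Hᴴ * H * C with hAdef
  have hw : ((s⁻¹ : ℂ) • (1 : Matrix (Fin K) (Fin K) ℂ) + (H * C)ᴴ * (H * C)) *ᵥ
      (A⁻¹ *ᵥ (Cᴴ *ᵥ b)) = Cᴴ *ᵥ b := by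
    rw [← hA, ← hAdef, mulVec_mulVec, mul_nonsing_inv _ hdet, one_mulVec]
  have hval : (star b) ᵥ* (C * A⁻¹ * Cᴴ) ⬝ᵥ b = star (Cᴴ *ᵥ b) ⬝ᵥ (A⁻¹ *ᵥ (Cᴴ *ᵥ b)) := by
    rw [star_mulVec, conjTranspose_conjTranspose, mulVec_mulVec, dotProduct_mulVec,
      vecMul_vecMul, Matrix.mul_assoc]
  have hf : ∀ α : Fin M → ℂ, Cᴴ *ᵥ (Hᴴ *ᵥ α - b) = (H * C)ᴴ *ᵥ α - Cᴴ *ᵥ b := by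
    intro α
    rw [mulVec_sub, mulVec_mulVec, conjTranspose_mul]
  have hk := key s hs (H * C) _ _ hw
  rw [hval]
  constructor
  · refine ⟨(H * C) *ᵥ (A⁻¹ *ᵥ (Cᴴ *ᵥ b)), ?_⟩
    have := hk 0
    rw [add_zero] at this
    rw [hf, this]
    simp [hnormSq]
  · rintro x ⟨α, rfl⟩
    have := hk (α - (H * C) *ᵥ (A⁻¹ *ᵥ (Cᴴ *ᵥ b)))
    rw [add_sub_cancel] at this
    rw [hf, this]
    have h1 := mul_nonneg hs.le
      (hnormSq_nonneg ((H * C)ᴴ *ᵥ (α - (H * C) *ᵥ (A⁻¹ *ᵥ (Cᴴ *ᵥ b)))))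
    have h2 := hnormSq_nonneg (α - (H * C) *ᵥ (A⁻¹ *ᵥ (Cᴴ *ᵥ b)))
    linarith
end
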